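/- Under dichotomous valuations, envy-freeness can be achieved with total subsidy at most n − 1: there exists a complete allocation A and subsidies p ∈ ℝ_{≥0}^n with ∑_i p_i ≤ n − 1 such that (A, p) is an envy-free solution. -/

import Mathlib

/-!
Marginals are `0` or `1`, so up to an additive constant valuations are integer valued and any envy
that is not tight has slack at least one. Goods are allocated one at a time, keeping the allocation
envy-free with subsidies in `{0, 1}`; call `i → j` tight if `i` is indifferent between its own
(bundle, subsidy) pair and that of `j`.

* Raising by one the subsidies of a set of agents that no tight edge enters preserves envy-freeness.
  Hence, if the subsidies are maximal, every strongly connected component of the tight graph that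
  no tight edge enters contains an agent `k` with subsidy one.
* Such a `k` can absorb a new good `g`. If no agent tight towards `k` values `g` on top of `k`'s
  bundle, then `k` just receives `g`. Otherwise some such agent `i` does, and `i → k` lies on a
  cycle of tight edges. Rotate the pairs along it, after adding `g` to the bundle of `k` and
  lowering its subsidy to zero: this pair looks no better than before to anyone, and just as good
  to its new owner `i`.

Finally, subtracting the least subsidy makes some subsidy zero while the others are at most one.
-/

section Relation

open Relation

variable {α : Type*} {r : α → α → Prop} {a b : α}

lemma exists_nodup_isChain_cons_of_reflTransGen (h : ReflTransGen r a b) :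
    ∃ l : List α, (a :: l).Nodup ∧ (a :: l).IsChain r ∧
      (a :: l).getLast (List.cons_ne_nil a l) = b := by
  induction h using ReflTransGen.head_induction_on with
  | refl => exact ⟨[], by simp⟩
  | @head a c hac _ ih =>
    obtain ⟨l, hnodup, hchain, hlast⟩ := ih
    by_cases ha : a ∈ c :: l
    · obtain ⟨s, t, hst⟩ := List.append_of_mem ha
      simp only [hst] at hnodup hchain hlast
      exact ⟨t, hnodup.of_append_right, hchain.right_of_append, by simpa using hlast⟩
    · exact ⟨c :: l, List.nodup_cons.2 ⟨ha, hnodup⟩, hchain.cons_cons hac, by simpa using hlast⟩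

lemma exists_perm_of_reflTransGen (hr : ∀ x, r x x) (h : ReflTransGen r a b) (hba : r b a) :
    ∃ σ : Equiv.Perm α, σ b = a ∧ ∀ x, r x (σ x) := by
  classical
  obtain ⟨l, hnodup, hchain, hlast⟩ := exists_nodup_isChain_cons_of_reflTransGen h
  have hσb : (a :: l).formPerm b = a := by
    conv_lhs => rw [← hlast]
    exact List.formPerm_apply_getLast a l
  refine ⟨(a :: l).formPerm, hσb, fun x ↦ ?_⟩
  by_cases hx : x ∈ a :: l
  · obtain ⟨n, hn, rfl⟩ := List.getElem_of_mem hx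
    by_cases hn' : n + 1 < (a :: l).length
    · rw [List.formPerm_apply_lt_getElem _ hnodup n hn']
      exact List.isChain_iff_getElem.1 hchain n hn'
    · have hxb : (a :: l)[n] = b := by
        rw [← hlast, List.getLast_eq_getElem]
        congr 1
        omega
      rwa [hxb, hσb]
  · rw [List.formPerm_apply_of_notMem hx]
    exact hr x

lemma exists_forall_reflTransGen_symm [Finite α] [Nonempty α] (r : α → α → Prop) :
    ∃ a, ∀ x, ReflTransGen r x a → ReflTransGen r a x := by
  let _ : Preorder α :=
    { le := ReflTransGen r
      le_refl := fun _ ↦ .refl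
      le_trans := fun _ _ _ ↦ .trans }
  obtain ⟨a, -, ha⟩ := (Set.finite_univ (α := α)).exists_minimal Set.univ_nonempty
  exact ⟨a, fun x hx ↦ ha trivial hx⟩

end Relation

namespace FairDivision

open Relation

variable {ι α R : Type*}

/-- A dichotomous valuation: every good has marginal value `0` or `1`. No normalization of `v ∅` is
included, because envy-freeness is unaffected by adding a constant to a valuation. -/
def IsDichotomous [DecidableEq α] [Ring R] (v : Finset α → R) : Prop :=
  ∀ S g, v (insert g S) - v S = 0 ∨ v (insert g S) - v S = 1

/-- Envy-freeness of the bundles `A` with subsidies `p`. The bundles need not be disjoint or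
cover all goods. -/
def EnvyFree [Add R] [LE R] (v : ι → Finset α → R) (A : ι → Finset α) (p : ι → R) : Prop :=
  ∀ i j, v i (A j) + p j ≤ v i (A i) + p i

/-- The edge relation of the tight envy graph: agent `i` is indifferent between its own bundle and
subsidy and those of agent `j`. -/
def TightEnvy [Add R] (v : ι → Finset α → R) (A : ι → Finset α) (p : ι → R) (i j : ι) : Prop :=
  v i (A j) + p j = v i (A i) + p i

lemma tightEnvy_refl [Add R] (v : ι → Finset α → R) (A : ι → Finset α) (p : ι → R) (i : ι) :
    TightEnvy v A p i i :=
  rfl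

/-- The bundles after adding the good `g` to the bundle of agent `k`; `g` is not removed from the
other bundles. -/
def giveTo [DecidableEq ι] [DecidableEq α] (A : ι → Finset α) (g : α) (k : ι) : ι → Finset α :=
  Function.update A k (insert g (A k))

/-- The bundles of an allocation of the goods in `T`. An allocation is encoded by its owner map,
which makes disjointness automatic; the owners of goods outside `T` are irrelevant. -/
def bundle [DecidableEq ι] (owner : α → ι) (T : Finset α) (i : ι) : Finset α :=
  {x ∈ T | owner x = i}

lemma IsDichotomous.exists_int [DecidableEq α] [CommRing R] [CharZero R] {v : Finset α → R}
    (hv : IsDichotomous v) : ∃ w : Finset α → ℤ, IsDichotomous w ∧ ∀ S, v S = v ∅ + w S := by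
  have hint (S : Finset α) : ∃ z : ℤ, v S = v ∅ + z := by
    induction S using Finset.induction_on with
    | empty => exact ⟨0, by simp⟩
    | insert g S _ ih =>
      obtain ⟨z, hz⟩ := ih
      rcases hv S g with h | h
      · exact ⟨z, by linear_combination h + hz⟩
      · exact ⟨z + 1, by push_cast; linear_combination h + hz⟩
  choose w hw using hint
  refine ⟨w, fun S g ↦ ?_, hw⟩
  have hmarginal : v (insert g S) - v S = ((w (insert g S) - w S : ℤ) : R) := by
    rw [hw, hw S]
    push_cast
    ring
  simpa only [hmarginal, Int.cast_eq_zero, Int.cast_eq_one] using hv S g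

section OrderedRing

variable [CommRing R] [LinearOrder R] [IsStrictOrderedRing R]
  {v : ι → Finset α → R} {A : ι → Finset α} {p : ι → R} {g : α} {i k : ι}

lemma EnvyFree.sub_const (h : EnvyFree v A p) (c : R) : EnvyFree v A (fun i ↦ p i - c) := by
  intro i j
  linarith [h i j]

variable [DecidableEq α]

lemma IsDichotomous.le_insert {v : Finset α → R} (hv : IsDichotomous v) (S : Finset α) (g : α) :
    v S ≤ v (insert g S) := by
  rcases hv S g with h | h <;> linarith

lemma IsDichotomous.insert_le_add_one {v : Finset α → R} (hv : IsDichotomous v) (S : Finset α)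
    (g : α) : v (insert g S) ≤ v S + 1 := by
  rcases hv S g with h | h <;> linarith

lemma EnvyFree.rotate_giveTo [DecidableEq ι] (hv : ∀ i, IsDichotomous (v i))
    (h : EnvyFree v A p) {σ : Equiv.Perm ι} (hσ : ∀ j, TightEnvy v A p j (σ j)) (hik : σ i = k)
    (hgain : v i (insert g (A k)) = v i (A k) + 1) :
    EnvyFree v (giveTo A g k ∘ σ) (Function.update p k (p k - 1) ∘ σ) := by
  set p' := Function.update p k (p k - 1)
  have hle (a b : ι) : v a (giveTo A g k b) + p' b ≤ v a (A b) + p b := by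
    rcases eq_or_ne b k with rfl | hb
    · simp only [giveTo, p', Function.update_self]
      linarith [(hv a).insert_le_add_one (A b) g]
    · simp [giveTo, p', hb]
  have heq (a : ι) : v a (giveTo A g k (σ a)) + p' (σ a) = v a (A (σ a)) + p (σ a) := by
    by_cases ha : σ a = k
    · obtain rfl : a = i := σ.injective (ha.trans hik.symm)
      simp only [ha, giveTo, p', Function.update_self]
      linarith
    · simp [giveTo, p', ha]
  intro a b
  calc v a (giveTo A g k (σ b)) + p' (σ b)
      ≤ v a (A (σ b)) + p (σ b) := hle a (σ b)
    _ ≤ v a (A a) + p a := h a (σ b)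
    _ = v a (A (σ a)) + p (σ a) := (hσ a).symm
    _ = v a (giveTo A g k (σ a)) + p' (σ a) := (heq a).symm

end OrderedRing

section Integer

variable {w : ι → Finset α → ℤ} {A : ι → Finset α} {q : ι → ℤ} {i j k : ι}

lemma EnvyFree.add_one_le (h : EnvyFree w A q) (hij : ¬TightEnvy w A q i j) :
    w i (A j) + q j + 1 ≤ w i (A i) + q i :=
  (h i j).lt_of_ne hij

lemma EnvyFree.add_indicator (h : EnvyFree w A q) {D : Set ι}
    (hD : ∀ i j, TightEnvy w A q i j → j ∈ D → i ∈ D) :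
    EnvyFree w A (q + D.indicator 1) := by
  classical
  intro i j
  have hij := h i j
  have hgap (hi : i ∉ D) (hj : j ∈ D) : w i (A j) + q j + 1 ≤ w i (A i) + q i :=
    h.add_one_le fun ht ↦ hi (hD i j ht hj)
  simp only [Pi.add_apply, Set.indicator_apply, Pi.one_apply]
  grind

lemma EnvyFree.giveTo_of_forall_tightEnvy [DecidableEq ι] [DecidableEq α] {g : α}
    (hw : ∀ i, IsDichotomous (w i)) (h : EnvyFree w A q)
    (hk : ∀ i, TightEnvy w A q i k → w i (insert g (A k)) = w i (A k)) :
    EnvyFree w (giveTo A g k) q := by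
  have hown (i : ι) : w i (A i) ≤ w i (giveTo A g k i) := by
    rcases eq_or_ne i k with rfl | hi
    · simpa [giveTo] using (hw i).le_insert (A i) g
    · simp [giveTo, hi]
  intro i j
  suffices w i (giveTo A g k j) + q j ≤ w i (A i) + q i by linarith [hown i]
  rcases eq_or_ne j k with rfl | hj
  · simp only [giveTo, Function.update_self]
    by_cases ht : TightEnvy w A q i j
    · exact (hk i ht).symm ▸ h i j
    · linarith [h.add_one_le ht, (hw i).insert_le_add_one (A j) g]
  · simpa [giveTo, hj] using h i j

lemma EnvyFree.exists_source_eq_one [Finite ι] [Nonempty ι] (h : EnvyFree w A q)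
    (hq : q ∈ Set.Icc 0 1) :
    ∃ q' ∈ Set.Icc (0 : ι → ℤ) 1, EnvyFree w A q' ∧ ∃ k, q' k = 1 ∧
      ∀ x, ReflTransGen (TightEnvy w A q') x k → ReflTransGen (TightEnvy w A q') k x := by
  classical
  have := Fintype.ofFinite ι
  obtain ⟨q', ⟨hq', h'⟩, hmax⟩ :=
    ((Set.finite_Icc (0 : ι → ℤ) 1).inter_of_left {q | EnvyFree w A q}).exists_maximal ⟨q, hq, h⟩
  obtain ⟨s, hs⟩ := exists_forall_reflTransGen_symm (TightEnvy w A q')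
  obtain ⟨k, hks, hk⟩ : ∃ k, ReflTransGen (TightEnvy w A q') k s ∧ q' k = 1 := by
    by_contra! hne
    set D : Set ι := {x | ReflTransGen (TightEnvy w A q') x s}
    have hraise : EnvyFree w A (q' + D.indicator 1) :=
      h'.add_indicator fun _ _ hij hj ↦ .head hij hj
    have hle : q' ≤ q' + D.indicator 1 :=
      le_add_of_nonneg_right (Set.indicator_nonneg fun _ _ ↦ zero_le_one)
    have hone : q' + D.indicator 1 ≤ 1 := by
      intro x
      have hx : q' x ≤ 1 := hq'.2 x
      by_cases hxD : x ∈ D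
      · simpa [hxD] using Int.lt_iff_add_one_le.1 (hx.lt_of_ne (hne x hxD))
      · simpa [hxD] using hx
    have hs_le := hmax ⟨⟨hq'.1.trans hle, hone⟩, hraise⟩ hle s
    simp [show s ∈ D from .refl] at hs_le
  exact ⟨q', hq', h', k, hk, fun x hx ↦ hks.trans (hs x (hx.trans hks))⟩

lemma EnvyFree.exists_giveTo [Finite ι] [Nonempty ι] [DecidableEq ι] [DecidableEq α]
    (hw : ∀ i, IsDichotomous (w i)) (h : EnvyFree w A q) (hq : q ∈ Set.Icc 0 1) (g : α) :
    ∃ k, ∃ σ : Equiv.Perm ι, ∃ q' ∈ Set.Icc (0 : ι → ℤ) 1,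
      EnvyFree w (giveTo A g k ∘ σ) q' := by
  obtain ⟨q, hq, h, k, hqk, hsource⟩ := h.exists_source_eq_one hq
  refine ⟨k, ?_⟩
  by_cases hgain : ∃ i, TightEnvy w A q i k ∧ w i (insert g (A k)) ≠ w i (A k)
  · obtain ⟨i, hik, hne⟩ := hgain
    obtain ⟨σ, hσi, hσ⟩ := exists_perm_of_reflTransGen (tightEnvy_refl w A q)
      (hsource i (.single hik)) hik
    refine ⟨σ, _, ⟨fun j ↦ ?_, fun j ↦ ?_⟩, h.rotate_giveTo hw hσ hσi ?_⟩
    · rcases eq_or_ne (σ j) k with hj | hj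
      · simp [hj, hqk]
      · simpa [hj] using hq.1 (σ j)
    · rcases eq_or_ne (σ j) k with hj | hj
      · simp [hj, hqk]
      · simpa [hj] using hq.2 (σ j)
    · have := hw i (A k) g
      omega
  · push Not at hgain
    exact ⟨1, q, hq, h.giveTo_of_forall_tightEnvy hw hgain⟩

end Integer

section Bundle

variable [DecidableEq ι]

lemma bundle_empty (owner : α → ι) (i : ι) : bundle owner ∅ i = ∅ :=
  Finset.filter_empty _

lemma disjoint_bundle (owner : α → ι) (T : Finset α) {i j : ι} (hij : i ≠ j) :
    Disjoint (bundle owner T i) (bundle owner T j) :=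
  Finset.disjoint_filter.2 fun _ _ hi hj ↦ hij (hi.symm.trans hj)

lemma mem_bundle_owner {T : Finset α} {x : α} (owner : α → ι) (hx : x ∈ T) :
    x ∈ bundle owner T (owner x) :=
  Finset.mem_filter.2 ⟨hx, rfl⟩

lemma bundle_symm_comp (σ : Equiv.Perm ι) (owner : α → ι) (T : Finset α) :
    bundle (σ.symm ∘ owner) T = bundle owner T ∘ σ := by
  ext i x
  simp [bundle, Equiv.symm_apply_eq]

lemma bundle_update_insert [DecidableEq α] (owner : α → ι) {T : Finset α} {g : α} (hg : g ∉ T)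
    (k : ι) :
    bundle (Function.update owner g k) (insert g T) = giveTo (bundle owner T) g k := by
  ext i x
  rcases eq_or_ne x g with rfl | hx <;> rcases eq_or_ne i k with rfl | hi <;>
    simp [bundle, giveTo, *, Ne.symm]

end Bundle

lemma exists_envyFree_bundle_int [Finite ι] [Nonempty ι] [DecidableEq ι] [DecidableEq α]
    {w : ι → Finset α → ℤ} (hw : ∀ i, IsDichotomous (w i)) (T : Finset α) :
    ∃ owner : α → ι, ∃ q ∈ Set.Icc (0 : ι → ℤ) 1, EnvyFree w (bundle owner T) q := by
  induction T using Finset.induction_on with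
  | empty =>
    refine ⟨fun _ ↦ Classical.arbitrary ι, 0, by simp, fun i j ↦ ?_⟩
    simp [bundle_empty]
  | insert g T hg ih =>
    obtain ⟨owner, q, hq, h⟩ := ih
    obtain ⟨k, σ, q', hq', h'⟩ := h.exists_giveTo hw hq g
    refine ⟨σ.symm ∘ Function.update owner g k, q', hq', ?_⟩
    rwa [bundle_symm_comp, bundle_update_insert owner hg]

section Subsidy

variable [CommRing R] [LinearOrder R] [IsStrictOrderedRing R] {v : ι → Finset α → R}

theorem exists_envyFree_bundle [Finite ι] [Nonempty ι] [DecidableEq ι] [DecidableEq α]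
    (hv : ∀ i, IsDichotomous (v i)) (T : Finset α) :
    ∃ owner : α → ι, ∃ p ∈ Set.Icc (0 : ι → R) 1, EnvyFree v (bundle owner T) p := by
  choose w hw hvw using fun i ↦ (hv i).exists_int
  obtain ⟨owner, q, hq, h⟩ := exists_envyFree_bundle_int hw T
  refine ⟨owner, fun i ↦ q i, ⟨fun i ↦ ?_, fun i ↦ ?_⟩, fun i j ↦ ?_⟩
  · exact Int.cast_nonneg (hq.1 i)
  · exact (Int.cast_mono (hq.2 i)).trans_eq Int.cast_one
  · have hij : (w i (bundle owner T j) : R) + q j ≤ w i (bundle owner T i) + q i :=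
      mod_cast h i j
    linarith [hvw i (bundle owner T j), hvw i (bundle owner T i)]

lemma EnvyFree.exists_eq_zero [Finite ι] [Nonempty ι] {A : ι → Finset α} {p : ι → R}
    (h : EnvyFree v A p) (hp : p ∈ Set.Icc 0 1) :
    ∃ p' ∈ Set.Icc (0 : ι → R) 1, EnvyFree v A p' ∧ ∃ i, p' i = 0 := by
  obtain ⟨i, hi⟩ := Finite.exists_min p
  refine ⟨fun j ↦ p j - p i, ⟨fun j ↦ sub_nonneg.2 (hi j), fun j ↦ ?_⟩, h.sub_const (p i), i,
    sub_self (p i)⟩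
  exact (sub_le_self _ (hp.1 i)).trans (hp.2 j)

lemma sum_le_card_sub_one [Fintype ι] {p : ι → R} (hp : p ≤ 1) {i : ι} (hi : p i = 0) :
    ∑ j, p j ≤ Fintype.card ι - 1 := by
  classical
  calc ∑ j, p j = ∑ j ∈ Finset.univ.erase i, p j := (Finset.sum_erase _ hi).symm
    _ ≤ ∑ j ∈ Finset.univ.erase i, 1 := Finset.sum_le_sum fun j _ ↦ hp j
    _ = Fintype.card ι - 1 := by
      simp [Finset.card_erase_of_mem, Nat.cast_pred (Fintype.card_pos_iff.2 ⟨i⟩)]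

end Subsidy

end FairDivision

open FairDivision in
theorem total_subsidy_at_most_n_minus_one_general {ι α R : Type*} [Fintype ι] [Nonempty ι]
    [Finite α] [DecidableEq α] [CommRing R] [LinearOrder R] [IsStrictOrderedRing R]
    (v : ι → Finset α → R) (hv : ∀ i, IsDichotomous (v i)) :
    ∃ (A : ι → Finset α) (p : ι → R),
      (∀ i j, i ≠ j → Disjoint (A i) (A j)) ∧
      (∀ g, ∃ i, g ∈ A i) ∧
      (∀ i, 0 ≤ p i) ∧
      ∑ i, p i ≤ (Fintype.card ι : R) - 1 ∧
      EnvyFree v A p := by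
  classical
  have := Fintype.ofFinite α
  obtain ⟨owner, p₀, hp₀, h₀⟩ := exists_envyFree_bundle hv Finset.univ
  obtain ⟨p, hp, h, i, hi⟩ := h₀.exists_eq_zero hp₀
  exact ⟨bundle owner Finset.univ, p, fun _ _ ↦ disjoint_bundle owner _,
    fun g ↦ ⟨owner g, mem_bundle_owner owner (Finset.mem_univ g)⟩, hp.1,
    sum_le_card_sub_one hp.2 hi, h⟩

/-- Under dichotomous valuations, envy-freeness can be achieved with
total subsidy at most `n - 1`: there exist a complete allocation `A` and
nonnegative subsidies `p` with `∑ i, p i ≤ n - 1` such that `(A, p)` is an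
envy-free solution. -/
theorem total_subsidy_at_most_n_minus_one {n m : ℕ} (hn : 1 ≤ n)
    (v : Fin n → Finset (Fin m) → ℝ)
    (hempty : ∀ i, v i ∅ = 0)
    (hdich : ∀ i (S : Finset (Fin m)) (g : Fin m),
        v i (insert g S) - v i S = 0 ∨ v i (insert g S) - v i S = 1) :
    ∃ (A : Fin n → Finset (Fin m)) (p : Fin n → ℝ),
      (∀ i j, i ≠ j → Disjoint (A i) (A j)) ∧
      (∀ g : Fin m, ∃ i, g ∈ A i) ∧
      (∀ i, 0 ≤ p i) ∧
      (∑ i, p i ≤ (n : ℝ) - 1) ∧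
      (∀ i j, v i (A j) + p j ≤ v i (A i) + p i) := by
  have : Nonempty (Fin n) := ⟨⟨0, hn⟩⟩
  simpa [FairDivision.EnvyFree] using total_subsidy_at_most_n_minus_one_general v hdich
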